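/- Let T > 0 and θ, μ ∈ (0,1) with θ + μ > 1. Let f : [0,T] → ℝ be θ-Hölder continuous and g : [0,T] → ℝ be μ-Hölder continuous, and let 0 ≤ a < c < d < b ≤ T. Then both sequences of Riemann sums T_n = Σ_{k=0}^{n−1} f(kT/n)·( g(min(max((k+1)T/n, c), d)) − g(min(max(kT/n, c), d)) ) and U_n = Σ_{k=0}^{n−1} f(kT/n)·1_{[c,d]}(kT/n)·( g(min(max((k+1)T/n, a), b)) − g(min(max(kT/n, a), b)) ) converge as n → ∞, and they have the same limit; that is, the Young integral is compatible: ∫_c^d f dg = ∫_a^b f·1_{[c,d]} dg. -/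

import Mathlib

/-!
The convergence of the Riemann sums is Young's theorem for uniform partitions. Merging two adjacent
blocks `[s, u]`, `[u, v]` of a partition changes the sum by `(f u - f s) * (g v - g u)`, which is of
order `(v - s) ^ (θ + μ)`. Since `θ + μ > 1`, repeated halving of a block costs in total
only a constant times `(length of the block) ^ (θ + μ)` (`young_discrete`), uniformly in the number of
subintervals. Summing over the `n` blocks of the partition of mesh `T / n`, the sums with `n` and
`n * m` intervals differ by `O(n ^ (1 - (θ + μ)))` (`riemann_refine`). Comparing the sums for `n` and
`m` with the one for `n * m` shows that the sequence is Cauchy. This applies to the sums over `[c, d]`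
because the integrator frozen outside `[c, d]` is still Hölder continuous.

The two sequences of sums differ only in the terms of the subintervals containing `c` or `d`: at most
two terms, each `O((T / n) ^ μ)` (`compat_bound`), so they have the same limit.
-/


open Filter

/-- The set of Hölder quotients `|f t - f s| / (t - s)^θ` over `0 ≤ s < t ≤ T`.
`f` is θ-Hölder continuous on `[0,T]` iff this set is bounded above. -/
def holderSet (T θ : ℝ) (f : ℝ → ℝ) : Set ℝ :=
  {r | ∃ s t : ℝ, 0 ≤ s ∧ s < t ∧ t ≤ T ∧ r = |f t - f s| / (t - s) ^ θ}

/-- The Riemann sum `S_n = Σ_{k=0}^{n-1} h(kT/n) ⬝ (g(min(max((k+1)T/n, a), b)) -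
g(min(max(kT/n, a), b)))`. -/
noncomputable def riemannSum (T a b : ℝ) (h g : ℝ → ℝ) (n : ℕ) : ℝ :=
  ∑ k ∈ Finset.range n,
    h (k * T / n) *
      (g (min (max ((k + 1) * T / n) a) b) - g (min (max (k * T / n) a) b))

/-! ### Hölder bounds -/

lemma holder_bound {T θ : ℝ} (hθ : 0 < θ) {f : ℝ → ℝ} (hf : BddAbove (holderSet T θ f)) :
    ∃ K : ℝ, 0 ≤ K ∧ ∀ s t : ℝ, 0 ≤ s → s ≤ t → t ≤ T → |f t - f s| ≤ K * (t - s) ^ θ := by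
  obtain ⟨K, hK⟩ := hf
  refine ⟨max K 0, le_max_right _ _, fun s t hs hst ht => ?_⟩
  rcases hst.eq_or_lt with rfl | hlt
  · simp [Real.zero_rpow hθ.ne']
  · have h1 := hK ⟨s, t, hs, hlt, ht, rfl⟩
    have hpos : 0 < (t - s) ^ θ := Real.rpow_pos_of_pos (by linarith) _
    rw [div_le_iff₀ hpos] at h1
    exact h1.trans (mul_le_mul_of_nonneg_right (le_max_left _ _) hpos.le)

/-- Freezing `g` outside `[c, d]` preserves its Hölder bound, since the clamp onto `[c, d]` is
monotone and 1-Lipschitz. -/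
lemma holder_clamp {T μ K c d : ℝ} (hμ : 0 < μ) (hK : 0 ≤ K) {g : ℝ → ℝ}
    (hg : ∀ s t : ℝ, 0 ≤ s → s ≤ t → t ≤ T → |g t - g s| ≤ K * (t - s) ^ μ)
    (hc : 0 ≤ c) (hcd : c ≤ d) (hd : d ≤ T) (s t : ℝ) (hst : s ≤ t) :
    |g (min (max t c) d) - g (min (max s c) d)| ≤ K * (t - s) ^ μ := by
  have h1 : min (max s c) d ≤ min (max t c) d := by gcongr
  have h2 : min (max t c) d - min (max s c) d ≤ t - s := by
    rcases max_cases t c with h | h <;> rcases max_cases s c with h' | h' <;>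
    rcases min_cases (max t c) d with k | k <;> rcases min_cases (max s c) d with k' | k' <;>
    linarith
  refine (hg _ _ (le_min (hc.trans (le_max_right _ _)) (hc.trans hcd)) h1
    ((min_le_right _ _).trans hd)).trans ?_
  gcongr

/-! ### Refinement estimate for Riemann sums -/

/-- Discrete Young–Loève estimate: a block of `m` steps can be replaced by a single step at a cost
of order `m ^ (θ + μ)`. By induction, splitting the block into two nearly equal halves of lengths `p`
and `q`: as `p, q ≤ 2m/3`, one has `p ^ γ + q ^ γ ≤ (2/3) ^ (γ - 1) * m ^ γ` with `γ = θ + μ`. -/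
lemma young_discrete {θ μ A B : ℝ} (hθ : 0 < θ) (hμ : 0 < μ) (hθμ : 1 < θ + μ)
    (hA : 0 ≤ A) (hB : 0 ≤ B) (F G : ℕ → ℝ) (N : ℕ)
    (hF : ∀ i p : ℕ, i + p ≤ N → |F (i + p) - F i| ≤ A * (p : ℝ) ^ θ)
    (hG : ∀ i p : ℕ, i + p ≤ N → |G (i + p) - G i| ≤ B * (p : ℝ) ^ μ) :
    ∀ m i : ℕ, i + m ≤ N →
      |∑ j ∈ Finset.range m, F (i + j) * (G (i + j + 1) - G (i + j)) - F i * (G (i + m) - G i)|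
        ≤ A * B / (1 - (2 / 3 : ℝ) ^ (θ + μ - 1)) * (m : ℝ) ^ (θ + μ) := by
  have hr : (2 / 3 : ℝ) ^ (θ + μ - 1) < 1 :=
    Real.rpow_lt_one (by norm_num) (by norm_num) (by linarith)
  set r : ℝ := (2 / 3 : ℝ) ^ (θ + μ - 1) with hrdef
  have hr' : 0 < 1 - r := by linarith
  set C : ℝ := A * B / (1 - r) with hC
  have hC0 : 0 ≤ C := by positivity
  have hCr : C * (1 - r) = A * B := by rw [hC]; field_simp
  intro m
  induction m using Nat.strong_induction_on with
  | _ m ih =>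
  intro i him
  rcases Nat.lt_or_ge m 2 with hm | hm
  · have hz : 0 ≤ C * (m : ℝ) ^ (θ + μ) := by positivity
    interval_cases m
    · simpa using hz
    · simpa using hz
  · obtain ⟨p, hp⟩ : ∃ p, p = m / 2 := ⟨_, rfl⟩
    obtain ⟨q, hq⟩ : ∃ q, q = m - p := ⟨_, rfl⟩
    have hpq : m = p + q := by omega
    have h1 := ih p (by omega) i (by omega)
    have h2 := ih q (by omega) (i + p) (by omega)
    have h3 := hF i p (by omega)
    have h4 := hG (i + p) q (by omega)
    have hm0 : (0 : ℝ) < m := by positivity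
    have hpm : (p : ℝ) ≤ 2 / 3 * m := by
      have : 3 * p ≤ 2 * m := by omega
      have : (3 * p : ℝ) ≤ 2 * m := by exact_mod_cast this
      linarith
    have hqm : (q : ℝ) ≤ 2 / 3 * m := by
      have : 3 * q ≤ 2 * m := by omega
      have : (3 * q : ℝ) ≤ 2 * m := by exact_mod_cast this
      linarith
    have hsumc : (m : ℝ) = p + q := by exact_mod_cast hpq
    have key : ∀ x : ℝ, 0 < x → x ≤ 2 / 3 * m →
        x ^ (θ + μ) ≤ x * (r * (m : ℝ) ^ (θ + μ - 1)) := by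
      intro x hx hxm
      have e : x ^ (θ + μ) = x * x ^ (θ + μ - 1) := by
        rw [← Real.rpow_one_add' hx.le (by linarith)]; congr 1; ring
      rw [e, hrdef, ← Real.mul_rpow (by norm_num) hm0.le]
      gcongr
    have hp0 : (0 : ℝ) < p := by
      have : 0 < p := by omega
      exact_mod_cast this
    have hq0 : (0 : ℝ) < q := by
      have : 0 < q := by omega
      exact_mod_cast this
    have hsum : (p : ℝ) ^ (θ + μ) + (q : ℝ) ^ (θ + μ) ≤ r * (m : ℝ) ^ (θ + μ) := by
      have e : (m : ℝ) ^ (θ + μ) = m * (m : ℝ) ^ (θ + μ - 1) := by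
        rw [← Real.rpow_one_add' hm0.le (by linarith)]; congr 1; ring
      have a1 := key p hp0 hpm
      have a2 := key q hq0 hqm
      calc _ ≤ p * (r * (m : ℝ) ^ (θ + μ - 1)) + q * (r * (m : ℝ) ^ (θ + μ - 1)) :=
            add_le_add a1 a2
        _ = r * ((p + q : ℝ) * (m : ℝ) ^ (θ + μ - 1)) := by ring
        _ = _ := by rw [e, ← hsumc]
    -- The cost of merging the two halves, each taken as a single step, into one step.
    have hmerge : |(F (i + p) - F i) * (G (i + p + q) - G (i + p))|
        ≤ A * B * (m : ℝ) ^ (θ + μ) := by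
      rw [abs_mul]
      calc _ ≤ (A * (p : ℝ) ^ θ) * (B * (q : ℝ) ^ μ) := by gcongr
        _ ≤ (A * (m : ℝ) ^ θ) * (B * (m : ℝ) ^ μ) := by gcongr <;> linarith
        _ = _ := by rw [Real.rpow_add hm0]; ring
    have hsplit : ∑ j ∈ Finset.range m, F (i + j) * (G (i + j + 1) - G (i + j))
          - F i * (G (i + m) - G i)
        = (∑ j ∈ Finset.range p, F (i + j) * (G (i + j + 1) - G (i + j))
            - F i * (G (i + p) - G i))
          + (∑ j ∈ Finset.range q, F (i + p + j) * (G (i + p + j + 1) - G (i + p + j))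
            - F (i + p) * (G (i + p + q) - G (i + p)))
          + (F (i + p) - F i) * (G (i + p + q) - G (i + p)) := by
      rw [hpq, Finset.sum_range_add]
      simp only [← add_assoc]
      ring
    rw [hsplit]
    refine (abs_add_le _ _).trans ((add_le_add_left (abs_add_le _ _) _).trans ?_)
    have h5 : C * ((p : ℝ) ^ (θ + μ) + (q : ℝ) ^ (θ + μ)) ≤ C * (r * (m : ℝ) ^ (θ + μ)) := by
      gcongr
    have h6 : C * (1 - r) * (m : ℝ) ^ (θ + μ) = A * B * (m : ℝ) ^ (θ + μ) := by rw [hCr]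
    linarith

/-- Refining the uniform partition into `n` intervals by any integer factor `m` changes the Riemann
sum by `O(n ^ (1 - (θ + μ)))`, uniformly in `m`. -/
lemma riemann_refine {T θ μ A B : ℝ} (hT : 0 < T) (hθ : 0 < θ) (hμ : 0 < μ) (hθμ : 1 < θ + μ)
    (hA : 0 ≤ A) (hB : 0 ≤ B) (f G : ℝ → ℝ)
    (hf : ∀ s t : ℝ, 0 ≤ s → s ≤ t → t ≤ T → |f t - f s| ≤ A * (t - s) ^ θ)
    (hG : ∀ s t : ℝ, s ≤ t → |G t - G s| ≤ B * (t - s) ^ μ)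
    (n m : ℕ) (hn : 0 < n) (hm : 0 < m) :
    |∑ k ∈ Finset.range (n * m),
        f (k * T / (n * m : ℕ)) * (G ((k + 1) * T / (n * m : ℕ)) - G (k * T / (n * m : ℕ)))
      - ∑ k ∈ Finset.range n, f (k * T / n) * (G ((k + 1) * T / n) - G (k * T / n))|
      ≤ A * B / (1 - (2 / 3 : ℝ) ^ (θ + μ - 1)) * T ^ (θ + μ) * (n : ℝ) ^ (-(θ + μ - 1)) := by
  have hn0 : (0 : ℝ) < n := by exact_mod_cast hn
  have hm0 : (0 : ℝ) < m := by exact_mod_cast hm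
  have hN0 : (0 : ℝ) < (n * m : ℕ) := by exact_mod_cast Nat.mul_pos hn hm
  set N : ℕ := n * m with hN
  set h : ℝ := T / N with hh
  have hh0 : 0 < h := by positivity
  let F' : ℕ → ℝ := fun k => f (k * T / N)
  let G' : ℕ → ℝ := fun k => G (k * T / N)
  have hstep : ∀ i p : ℕ, ((i + p : ℕ) : ℝ) * T / N - i * T / N = p * h := by
    intro i p; rw [hh]; push_cast; ring
  have hmono : ∀ i p : ℕ, (i : ℝ) * T / N ≤ ((i + p : ℕ) : ℝ) * T / N := by
    intro i p; gcongr; omega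
  have hF' : ∀ i p : ℕ, i + p ≤ N → |F' (i + p) - F' i| ≤ (A * h ^ θ) * (p : ℝ) ^ θ := by
    intro i p hip
    have h1 := hf (i * T / N) ((i + p : ℕ) * T / N) (by positivity) (hmono i p) (by
      rw [div_le_iff₀ hN0, mul_comm]
      have : ((i + p : ℕ) : ℝ) ≤ N := by exact_mod_cast hip
      gcongr)
    rw [hstep, Real.mul_rpow (by positivity) hh0.le] at h1
    calc _ ≤ _ := h1
      _ = _ := by ring
  have hG' : ∀ i p : ℕ, i + p ≤ N → |G' (i + p) - G' i| ≤ (B * h ^ μ) * (p : ℝ) ^ μ := by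
    intro i p _
    have h1 := hG (i * T / N) ((i + p : ℕ) * T / N) (hmono i p)
    rw [hstep, Real.mul_rpow (by positivity) hh0.le] at h1
    calc _ ≤ _ := h1
      _ = _ := by ring
  have key := young_discrete hθ hμ hθμ (by positivity) (by positivity) F' G' N hF' hG' m
  have hblock : ∀ n' : ℕ, ∑ k ∈ Finset.range (n' * m), F' k * (G' (k + 1) - G' k)
      = ∑ k ∈ Finset.range n', ∑ j ∈ Finset.range m,
          F' (k * m + j) * (G' (k * m + j + 1) - G' (k * m + j)) := by
    intro n'
    induction n' with
    | zero => simp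
    | succ k ih => rw [Nat.succ_mul, Finset.sum_range_add, ih, Finset.sum_range_succ]
  have hcoarse : ∀ k : ℕ, ((k * m : ℕ) : ℝ) * T / N = k * T / n := by
    intro k
    rw [hN]; push_cast; field_simp
  have e1 : ∑ k ∈ Finset.range N, f (k * T / N) * (G ((k + 1) * T / N) - G (k * T / N))
      = ∑ k ∈ Finset.range (n * m), F' k * (G' (k + 1) - G' k) := by
    simp only [F', G', Nat.cast_add, Nat.cast_one, ← hN]
  have e2 : ∑ k ∈ Finset.range n, f (k * T / n) * (G ((k + 1) * T / n) - G (k * T / n))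
      = ∑ k ∈ Finset.range n, F' (k * m) * (G' (k * m + m) - G' (k * m)) := by
    refine Finset.sum_congr rfl fun k _ => ?_
    have := hcoarse (k + 1)
    rw [Nat.succ_mul] at this
    simp only [F', G', hcoarse, this, Nat.cast_succ]
  rw [e1, e2, hblock, ← Finset.sum_sub_distrib]
  refine (Finset.abs_sum_le_sum_abs _ _).trans ?_
  refine (Finset.sum_le_sum fun k hk => key (k * m) ?_).trans (le_of_eq ?_)
  · rw [hN, ← Nat.succ_mul]
    exact Nat.mul_le_mul_right _ (Finset.mem_range.1 hk)
  · rw [Finset.sum_const, Finset.card_range, nsmul_eq_mul]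
    have hhT : h ^ θ * h ^ μ * (m : ℝ) ^ (θ + μ) = T ^ (θ + μ) * (n : ℝ) ^ (-(θ + μ)) := by
      rw [← Real.rpow_add hh0, ← Real.mul_rpow hh0.le hm0.le, Real.rpow_neg hn0.le,
        ← Real.inv_rpow hn0.le, ← Real.mul_rpow hT.le (by positivity)]
      congr 1
      rw [hh, hN]; push_cast; field_simp
    have hnn : (n : ℝ) ^ (-(θ + μ - 1)) = n * (n : ℝ) ^ (-(θ + μ)) := by
      rw [← Real.rpow_one_add' hn0.le (by linarith)]; congr 1; ring
    rw [hnn]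
    linear_combination (n : ℝ) * (A * B / (1 - (2 / 3 : ℝ) ^ (θ + μ - 1))) * hhT

/-! ### Comparison of the two Riemann sums -/

/-- Any point `x` lies in at most one subinterval `[kT/n, (k+1)T/n)`. -/
lemma one_crossing {T x B : ℝ} (hT : 0 < T) (hB : 0 ≤ B) (n : ℕ) (hn : 0 < n) :
    ∑ k ∈ Finset.range n,
      (if (k : ℝ) * T / n ≤ x ∧ x < ((k : ℝ) + 1) * T / n then B else 0) ≤ B := by
  have hn0 : (0 : ℝ) < n := by exact_mod_cast hn
  rw [← Finset.sum_filter, Finset.sum_const, nsmul_eq_mul]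
  refine mul_le_of_le_one_left hB ?_
  rw [Nat.cast_le_one, Finset.card_le_one]
  have aux : ∀ k l : ℕ, (k : ℝ) * T / n ≤ x → x < ((l : ℝ) + 1) * T / n → k ≤ l := by
    intro k l hk hl
    have h := hk.trans_lt hl
    rw [div_lt_div_iff_of_pos_right hn0, mul_lt_mul_iff_of_pos_right hT] at h
    have : k < l + 1 := by exact_mod_cast h
    omega
  intro k hk l hl
  simp only [Finset.mem_filter] at hk hl
  exact le_antisymm (aux k l hk.2.1 hl.2.2) (aux l k hl.2.1 hk.2.2)

/-- The two Riemann sums differ only in the terms of the subintervals containing `c` or `d`. -/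
lemma compat_bound {T μ K M a b c d : ℝ} (hT : 0 < T) (hμ : 0 < μ) (hK : 0 ≤ K) (hM : 0 ≤ M)
    {f g : ℝ → ℝ} (hfM : ∀ t, 0 ≤ t → t ≤ T → |f t| ≤ M)
    (hg : ∀ s t : ℝ, 0 ≤ s → s ≤ t → t ≤ T → |g t - g s| ≤ K * (t - s) ^ μ)
    (ha : 0 ≤ a) (hac : a < c) (hcd : c < d) (hdb : d < b) (hbT : b ≤ T)
    (n : ℕ) (hn : 0 < n) :
    |riemannSum T a b (Set.indicator (Set.Icc c d) f) g n - riemannSum T c d f g n|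
      ≤ 2 * (M * (K * (T / n) ^ μ)) := by
  have hn0 : (0 : ℝ) < n := by exact_mod_cast hn
  set E : ℝ := M * (K * (T / n) ^ μ) with hE
  have hE0 : 0 ≤ E := by positivity
  unfold riemannSum
  rw [← Finset.sum_sub_distrib]
  refine (Finset.abs_sum_le_sum_abs _ _).trans ?_
  have hterm : ∀ k ∈ Finset.range n,
      |Set.indicator (Set.Icc c d) f (k * T / n) *
          (g (min (max ((k + 1) * T / n) a) b) - g (min (max (k * T / n) a) b)) -
        f (k * T / n) * (g (min (max ((k + 1) * T / n) c) d) - g (min (max (k * T / n) c) d))|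
      ≤ (if (k : ℝ) * T / n ≤ c ∧ c < ((k : ℝ) + 1) * T / n then E else 0)
        + (if (k : ℝ) * T / n ≤ d ∧ d < ((k : ℝ) + 1) * T / n then E else 0) := by
    intro k hk
    have hk1 : ((k : ℝ) + 1) ≤ n := by exact_mod_cast Finset.mem_range.1 hk
    have hs0 : 0 ≤ (k : ℝ) * T / n := by positivity
    have htT : ((k : ℝ) + 1) * T / n ≤ T := by
      rw [div_le_iff₀ hn0, mul_comm]; gcongr
    have hts : ((k : ℝ) + 1) * T / n = (k : ℝ) * T / n + T / n := by ring
    have hTn : 0 < T / n := by positivity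
    generalize (k : ℝ) * T / n = s at *
    generalize ((k : ℝ) + 1) * T / n = t at *
    have hfs := hfM s hs0 (by linarith)
    have hi1 : 0 ≤ (if s ≤ c ∧ c < t then E else 0) := by split_ifs <;> simp [hE0]
    have hi2 : 0 ≤ (if s ≤ d ∧ d < t then E else 0) := by split_ifs <;> simp [hE0]
    rcases lt_or_ge s c with hsc | hsc
    · rw [Set.indicator_of_notMem (by simp [hsc])]
      rw [zero_mul, zero_sub, abs_neg]
      rcases le_or_gt t c with htc | htc
      · rw [max_eq_right htc, max_eq_right hsc.le]
        simp only [sub_self, mul_zero, abs_zero]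
        positivity
      -- `s < c < t`: only the sum over `[c, d]` has a nonzero term.
      · rw [if_pos ⟨hsc.le, htc⟩, abs_mul]
        have h1 := holder_clamp hμ hK hg (ha.trans hac.le) hcd.le (by linarith) s t (by linarith)
        rw [show t - s = T / n by linarith] at h1
        have : |f s| * |g (min (max t c) d) - g (min (max s c) d)| ≤ E := by
          rw [hE]; gcongr
        linarith
    · rcases le_or_gt s d with hsd | hsd
      · rw [Set.indicator_of_mem (Set.mem_Icc.2 ⟨hsc, hsd⟩), ← mul_sub, max_eq_left (by linarith : a ≤ t),
          max_eq_left (by linarith : a ≤ s), max_eq_left (by linarith : c ≤ t),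
          max_eq_left hsc, min_eq_left hsd, min_eq_left (by linarith : s ≤ b)]
        rcases le_or_gt t d with htd | htd
        · rw [min_eq_left htd, min_eq_left (by linarith : t ≤ b)]
          simp only [sub_self, mul_zero, abs_zero]
          positivity
        -- `s ≤ d < t`: the increments end at `min t b` and at `d` respectively.
        · rw [if_pos (⟨hsd, htd⟩ : s ≤ d ∧ d < t), min_eq_right htd.le, sub_sub_sub_cancel_right,
            abs_mul]
          have h1 := hg d (min t b) (by linarith) (le_min htd.le hdb.le)
            ((min_le_right _ _).trans hbT)
          have h2 : (min t b - d) ^ μ ≤ (T / n) ^ μ :=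
            Real.rpow_le_rpow (sub_nonneg.2 (le_min htd.le hdb.le))
              (by linarith [min_le_left t b]) hμ.le
          have : |f s| * |g (min t b) - g d| ≤ E := by
            rw [hE]
            gcongr
            exact h1.trans (by gcongr)
          linarith
      · rw [Set.indicator_of_notMem (by simp [hsd]), max_eq_left hsc,
          max_eq_left (by linarith : c ≤ t), min_eq_right hsd.le,
          min_eq_right (by linarith : d ≤ t)]
        simp only [sub_self, mul_zero, zero_mul, abs_zero]
        positivity
  refine (Finset.sum_le_sum hterm).trans ?_
  rw [Finset.sum_add_distrib, two_mul]
  exact add_le_add (one_crossing hT hE0 n hn) (one_crossing hT hE0 n hn)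

/-! ### Convergence and compatibility -/

/-- compatibility of the Young integral: for `0 ≤ a < c < d < b ≤ T`,
both sequences of Riemann sums `T_n` (for `∫_c^d f dg`) and
`U_n` (for `∫_a^b f·1_{[c,d]} dg`) converge, with the same limit. -/
theorem young_integral_compatible
    (T θ μ : ℝ) (hT : 0 < T)
    (hθ : θ ∈ Set.Ioo (0 : ℝ) 1) (hμ : μ ∈ Set.Ioo (0 : ℝ) 1) (hθμ : 1 < θ + μ)
    (f g : ℝ → ℝ)
    (hf : BddAbove (holderSet T θ f)) (hg : BddAbove (holderSet T μ g))
    (a b c d : ℝ) (ha : 0 ≤ a) (hac : a < c) (hcd : c < d) (hdb : d < b) (hbT : b ≤ T) :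
    ∃ L : ℝ,
      Tendsto (fun n : ℕ => riemannSum T c d f g n) atTop (nhds L) ∧
      Tendsto (fun n : ℕ =>
          riemannSum T a b (Set.indicator (Set.Icc c d) f) g n) atTop (nhds L) := by
  obtain ⟨A, hA, hfA⟩ := holder_bound hθ.1 hf
  obtain ⟨B, hB, hgB⟩ := holder_bound hμ.1 hg
  have hG := holder_clamp (c := c) (d := d) hμ.1 hB hgB (by linarith) hcd.le (by linarith)
  set D : ℝ := A * B / (1 - (2 / 3 : ℝ) ^ (θ + μ - 1)) * T ^ (θ + μ) with hD
  have href : ∀ n m : ℕ, 0 < n → 0 < m →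
      |riemannSum T c d f g (n * m) - riemannSum T c d f g n|
        ≤ D * (n : ℝ) ^ (-(θ + μ - 1)) := fun n m hn hm =>
    riemann_refine hT hθ.1 hμ.1 hθμ hA hB f (fun t => g (min (max t c) d)) hfA hG n m hn hm
  have hlim : Tendsto (fun n : ℕ => D * (n : ℝ) ^ (-(θ + μ - 1))) atTop (nhds 0) := by
    simpa using ((tendsto_rpow_neg_atTop (by linarith : 0 < θ + μ - 1)).comp
      tendsto_natCast_atTop_atTop).const_mul D
  have hcauchy : CauchySeq (fun n : ℕ => riemannSum T c d f g n) := by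
    -- The sums for `m` and `n` are both compared with the one for the common refinement `m * n`.
    rw [Metric.cauchySeq_iff]
    intro ε hε
    obtain ⟨N, hN⟩ := eventually_atTop.1
      ((hlim.eventually (gt_mem_nhds (half_pos hε))).and (eventually_gt_atTop 0))
    refine ⟨N, fun m hm n hn => ?_⟩
    have h1 := (href m n (hN m hm).2 (hN n hn).2).trans_lt (hN m hm).1
    have h2 := (href n m (hN n hn).2 (hN m hm).2).trans_lt (hN n hn).1
    rw [mul_comm n m] at h2
    rw [Real.dist_eq]
    rw [abs_lt] at *
    constructor <;> linarith [h1.1, h1.2, h2.1, h2.2]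
  obtain ⟨L, hL⟩ := cauchySeq_tendsto_of_complete hcauchy
  refine ⟨L, hL, ?_⟩
  have hfM : ∀ t, 0 ≤ t → t ≤ T → |f t| ≤ |f 0| + A * T ^ θ := by
    intro t h0 hT'
    have h1 := hfA 0 t le_rfl h0 hT'
    have h2 : A * (t - 0) ^ θ ≤ A * T ^ θ := by
      have := hθ.1
      gcongr; linarith
    have h3 := abs_sub_abs_le_abs_sub (f t) (f 0)
    linarith
  have hdiff : Tendsto (fun n : ℕ => riemannSum T a b (Set.indicator (Set.Icc c d) f) g n
      - riemannSum T c d f g n) atTop (nhds 0) := by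
    have hE : Tendsto (fun n : ℕ => 2 * ((|f 0| + A * T ^ θ) * (B * (T / (n : ℝ)) ^ μ))) atTop
        (nhds 0) := by
      have h1 := (tendsto_const_div_atTop_nhds_zero_nat T).rpow_const (p := μ) (Or.inr hμ.1.le)
      rw [Real.zero_rpow hμ.1.ne'] at h1
      simpa using ((h1.const_mul B).const_mul (|f 0| + A * T ^ θ)).const_mul 2
    refine squeeze_zero_norm' ?_ hE
    filter_upwards [eventually_gt_atTop 0] with n hn
    exact compat_bound hT hμ.1 hB (by positivity) hfM hgB ha hac hcd hdb hbT n hn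
  simpa using hdiff.add hL
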